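/- Let ε_∞ ≥ 0 and P_max ≥ 0, let n ≥ 1, and let (ε_t) be a decreasing sequence of reals with ε_t ≥ ε_∞ converging to ε_∞. For each t, let μ_t be a probability measure on ℝ having a density with respect to Lebesgue measure bounded almost everywhere by P_max and satisfying μ_t((−∞, ε_∞)) = 0. Then the probability under the n-fold product measure μ_t^{⊗n} that all n coordinates are ≥ ε_t tends to 1 as t → ∞. Consequently, the proportion of accepted particles (coordinates strictly below ε_t) converges in probability to 0, so the APMC algorithm stops for any choice of the stopping threshold p_acc_min > 0. -/

import Mathlib

open MeasureTheory Filter ENNReal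

/-!
By the union bound, the probability that some particle is accepted is at most the sum over the
particles of the masses their laws give to `(-∞, ε_t)`. The part of each law below `ε_∞` is
negligible, and the part in `[ε_∞, ε_t)` is at most `P_max * (ε_t - ε_∞)`, which tends to `0`.
A positive acceptance rate requires an accepted particle.
-/

section DominatedLaws

lemma withDensity_le_smul_of_ae_le {α : Type*} {_ : MeasurableSpace α} {μ : Measure α}
    {f : α → ℝ≥0∞} {C : ℝ≥0∞} (hf : ∀ᵐ x ∂μ, f x ≤ C) : μ.withDensity f ≤ C • μ :=
  (withDensity_mono hf).trans_eq (withDensity_const C)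

lemma measure_Iio_le_of_le_smul_volume {μ : Measure ℝ} {C : ℝ≥0∞} (hμ : μ ≤ C • volume) (a b : ℝ) :
    μ (Set.Iio b) ≤ μ (Set.Iio a) + C * ENNReal.ofReal (b - a) :=
  calc μ (Set.Iio b)
      ≤ μ (Set.Iio a ∪ Set.Ico a b) := measure_mono Set.Iio_subset_Iio_union_Ico
    _ ≤ μ (Set.Iio a) + μ (Set.Ico a b) := measure_union_le _ _
    _ ≤ μ (Set.Iio a) + (C • volume) (Set.Ico a b) := by gcongr
    _ = μ (Set.Iio a) + C * ENNReal.ofReal (b - a) := by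
      rw [Measure.smul_apply, Real.volume_Ico, smul_eq_mul]

lemma tendsto_measure_Iio_zero_of_le_smul_volume {κ : Type*} {l : Filter κ} {μ : κ → Measure ℝ}
    {C : ℝ≥0∞} (hC : C ≠ ∞) (hμ : ∀ t, μ t ≤ C • volume) {ε : κ → ℝ} {a : ℝ}
    (hε : Tendsto ε l (nhds a)) (ha : Tendsto (fun t => μ t (Set.Iio a)) l (nhds 0)) :
    Tendsto (fun t => μ t (Set.Iio (ε t))) l (nhds 0) := by
  have hgap : Tendsto (fun t => ENNReal.ofReal (ε t - a)) l (nhds 0) := by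
    simpa using ENNReal.tendsto_ofReal (hε.sub_const a)
  have hbound : Tendsto (fun t => μ t (Set.Iio a) + C * ENNReal.ofReal (ε t - a)) l (nhds 0) := by
    simpa using ha.add (ENNReal.Tendsto.const_mul hgap (Or.inr hC))
  exact tendsto_of_tendsto_of_tendsto_of_le_of_le tendsto_const_nhds hbound
    (fun _ => zero_le) fun t => measure_Iio_le_of_le_smul_volume (hμ t) a (ε t)

end DominatedLaws

section AcceptanceRate

variable {ι : Type*} [Fintype ι]

/-- The proportion `p_acc` of the particles, indexed by a finite type, whose distance is strictly
below the tolerance `r`. It is `0` when there are no particles. -/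
noncomputable def acceptanceRate (r : ℝ) (x : ι → ℝ) : ℝ :=
  ((Finset.univ.filter fun i => x i < r).card : ℝ) / Fintype.card ι

lemma acceptanceRate_pos_iff [Nonempty ι] {r : ℝ} {x : ι → ℝ} :
    0 < acceptanceRate r x ↔ ∃ i, x i < r := by
  rw [acceptanceRate, div_pos_iff_of_pos_right (Nat.cast_pos.2 Fintype.card_pos), Nat.cast_pos,
    Finset.card_pos, Finset.filter_nonempty_iff]
  simp only [Finset.mem_univ, true_and]

end AcceptanceRate

section Stopping

open ProbabilityTheory

lemma measure_exists_mem_le_sum {ι Ω E : Type*} [Fintype ι] {_ : MeasurableSpace Ω}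
    {_ : MeasurableSpace E} {P : Measure Ω} {X : ι → Ω → E} {μ : ι → Measure E}
    (hX : ∀ i, HasLaw (X i) (μ i) P) {s : Set E} (hs : MeasurableSet s) :
    P {ω | ∃ i, X i ω ∈ s} ≤ ∑ i, μ i s :=
  calc P {ω | ∃ i, X i ω ∈ s}
      = P (⋃ i, {ω | X i ω ∈ s}) := by rw [Set.ofPred_exists]
    _ ≤ ∑ i, P {ω | X i ω ∈ s} := measure_iUnion_fintype_le P _
    _ = ∑ i, μ i s := Finset.sum_congr rfl fun i _ => (hX i).measure_eq hs

variable {κ ι : Type*} {l : Filter κ} {Ω : κ → Type*} {_ : ∀ t, MeasurableSpace (Ω t)}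
  {P : ∀ t, Measure (Ω t)}

lemma tendsto_probReal_one_of_tendsto_compl_zero [∀ t, IsProbabilityMeasure (P t)]
    {s : ∀ t, Set (Ω t)} (hs : Tendsto (fun t => (P t).real (s t)ᶜ) l (nhds 0)) :
    Tendsto (fun t => (P t).real (s t)) l (nhds 1) := by
  have hlower : Tendsto (fun t => 1 - (P t).real (s t)ᶜ) l (nhds 1) := by
    simpa using hs.const_sub 1
  refine tendsto_of_tendsto_of_tendsto_of_le_of_le hlower tendsto_const_nhds (fun t => ?_)
    fun _ => measureReal_le_one
  have hcover : 1 ≤ (P t).real (s t) + (P t).real (s t)ᶜ := by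
    simpa using measureReal_union_le (μ := P t) (s t) (s t)ᶜ
  exact sub_le_iff_le_add.2 hcover

lemma tendsto_measureReal_exists_mem_zero [Finite ι] {E : Type*} {_ : MeasurableSpace E}
    {X : ∀ t, ι → Ω t → E} {μ : κ → ι → Measure E} (hX : ∀ t i, HasLaw (X t i) (μ t i) (P t))
    {s : κ → Set E} (hs : ∀ t, MeasurableSet (s t))
    (hμ : ∀ i, Tendsto (fun t => μ t i (s t)) l (nhds 0)) :
    Tendsto (fun t => (P t).real {ω | ∃ i, X t i ω ∈ s t}) l (nhds 0) := by
  have := Fintype.ofFinite ι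
  have hsum : Tendsto (fun t => ∑ i, μ t i (s t)) l (nhds 0) := by
    simpa using tendsto_finsetSum Finset.univ fun i _ => hμ i
  have hexists : Tendsto (fun t => P t {ω | ∃ i, X t i ω ∈ s t}) l (nhds 0) :=
    tendsto_of_tendsto_of_tendsto_of_le_of_le tendsto_const_nhds hsum (fun _ => zero_le)
      fun t => measure_exists_mem_le_sum (hX t) (hs t)
  exact (ENNReal.tendsto_toReal zero_ne_top).comp hexists

theorem apmc_stops_general [Fintype ι] [Nonempty ι] [∀ t, IsProbabilityMeasure (P t)]
    {X : ∀ t, ι → Ω t → ℝ} {μ : κ → ι → Measure ℝ}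
    (hX : ∀ t i, HasLaw (X t i) (μ t i) (P t))
    {C : ℝ≥0∞} (hC : C ≠ ∞) (hμ : ∀ t i, μ t i ≤ C • volume)
    {ε : κ → ℝ} {εinf : ℝ} (hlim : Tendsto ε l (nhds εinf))
    (hbelow : ∀ i, Tendsto (fun t => μ t i (Set.Iio εinf)) l (nhds 0)) :
    Tendsto (fun t => (P t).real {ω | ∀ i, ε t ≤ X t i ω}) l (nhds 1) ∧
    ∀ δ : ℝ, 0 < δ →
      Tendsto (fun t => (P t).real {ω | δ ≤ acceptanceRate (ε t) fun i => X t i ω}) l (nhds 0) := by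
  have haccept : Tendsto (fun t => (P t).real {ω | ∃ i, X t i ω < ε t}) l (nhds 0) :=
    tendsto_measureReal_exists_mem_zero hX (fun _ => measurableSet_Iio) fun i =>
      tendsto_measure_Iio_zero_of_le_smul_volume hC (fun t => hμ t i) hlim (hbelow i)
  refine ⟨tendsto_probReal_one_of_tendsto_compl_zero ?_, fun δ hδ => ?_⟩
  · simpa only [Set.compl_ofPred, not_forall, not_le] using haccept
  · exact squeeze_zero (fun _ => measureReal_nonneg)
      (fun _ => measureReal_mono fun _ hω => acceptanceRate_pos_iff.1 (hδ.trans_le hω)) haccept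

end Stopping

/-- APMC stopping theorem: with `n` i.i.d. new particles whose distances follow a
law `μ_t` with Lebesgue density bounded a.e. by `P_max` and giving no mass below
`ε_∞`, and the tolerances `ε_t` decreasing to `ε_∞`, the probability that all `n`
distances are `≥ ε_t` (no particle accepted) tends to `1`; consequently the
proportion of accepted particles (distances `< ε_t`) converges in probability
to `0`. -/
theorem apmc_stops
    (εinf Pmax : ℝ) (hεinf : 0 ≤ εinf) (hPmax : 0 ≤ Pmax)
    (n : ℕ) (hn : 1 ≤ n)
    (ε : ℕ → ℝ) (hdec : ∀ t, ε (t + 1) ≤ ε t) (hge : ∀ t, εinf ≤ ε t)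
    (hlim : Tendsto ε atTop (nhds εinf))
    (μ : ℕ → Measure ℝ) [∀ t, IsProbabilityMeasure (μ t)]
    (f : ℕ → ℝ → ℝ≥0∞)
    (hdens : ∀ t, μ t = volume.withDensity (f t))
    (hbound : ∀ t, ∀ᵐ x ∂volume, f t x ≤ ENNReal.ofReal Pmax)
    (hsupp : ∀ t, μ t (Set.Iio εinf) = 0) :
    Tendsto
      (fun t => ((Measure.pi fun _ : Fin n => μ t)
        {x : Fin n → ℝ | ∀ i, ε t ≤ x i}).toReal) atTop (nhds 1) ∧
    ∀ δ : ℝ, 0 < δ →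
      Tendsto
        (fun t => ((Measure.pi fun _ : Fin n => μ t)
          {x : Fin n → ℝ |
            δ ≤ ((Finset.univ.filter fun i => x i < ε t).card : ℝ) / n}).toReal)
        atTop (nhds 0) := by
  have : Nonempty (Fin n) := ⟨⟨0, hn⟩⟩
  simpa only [acceptanceRate, Fintype.card_fin] using! apmc_stops_general
    (fun t i => (measurePreserving_eval (fun _ : Fin n => μ t) i).hasLaw) ofReal_ne_top
    (fun t _ => hdens t ▸ withDensity_le_smul_of_ae_le (hbound t)) hlim (by simp [hsupp])
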